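/- Suppose 0 ≤ ℓ(w, s i) ≤ B for all w ∈ 𝒲 and all i, and suppose P_{W,Z} ≪ P_W ⊗ P_Z. Then E_{(W,Z)}[ |R_test(W,Z) − R_train(W,Z)| ] ≤ sqrt( B² · C_{m,u} · (m+u) · (I(W;Z) + log 2) / (2·m·u) ). -/

import Mathlib

/-!
For a fixed parameter `w` the gap `Rtest - Rtrain` is an affine function of the sum of the first `m`
values drawn without replacement. Exposing the draws one at a time, the `k`-th draw enters the
conditional mean of that sum with coefficient `u / (m + u - k)`, so Hoeffding's lemma bounds the
logarithm of the moment generating function (`perm_mgf`) with the constant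
`u² ∑_{j = u}^{m + u - 1} j⁻² ≤ u² m / ((u - 1/2) (m + u - 1/2))`. Exposing the smaller of the
training and test parts turns this into `Cmu m u`: the gap is sub-Gaussian with variance proxy
`σ² = B² Cmu (m + u) / (4 m u)` (`gap_mgf`), hence `E exp (λ |gap|) ≤ 2 exp (λ² σ² / 2)` under the
product of the marginals (`abs_gap_mgf`).

The Donsker–Varadhan inequality transfers this bound to the joint law of `(W, Z)`:
`λ E|gap| ≤ I(W; Z) + log 2 + λ² σ² / 2`, and `λ = E|gap| / σ²` gives the claim. Since the
divergence is a Bochner integral, the log-likelihood ratio has to be integrable; it is, because `Z`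
takes `(m + u)!` equally likely values, which bounds the density by `(m + u)!` (`joint_le`).
-/

open MeasureTheory ProbabilityTheory Real

noncomputable section

/-- The constant `C_{m,u} = 2(m+u)·max(m,u)/((m+u−1/2)·(2·max(m,u)−1))`. -/
def Cmu (m u : ℕ) : ℝ :=
  2 * ((m : ℝ) + u) * max (m : ℝ) u / ((((m : ℝ) + u) - 1/2) * (2 * max (m : ℝ) u - 1))

/-- Transductive training error: average loss over the first `m` indices of the
sampling sequence `z`. -/
def Rtrain {S W : Type*} (m u : ℕ) (s : Fin (m + u) → S) (ℓ : W → S → ℝ)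
    (w : W) (z : Fin (m + u) → Fin (m + u)) : ℝ :=
  (∑ i : Fin (m + u), if (i : ℕ) < m then ℓ w (s (z i)) else 0) / m

/-- Transductive test error: average loss over the last `u` indices of the
sampling sequence `z`. -/
def Rtest {S W : Type*} (m u : ℕ) (s : Fin (m + u) → S) (ℓ : W → S → ℝ)
    (w : W) (z : Fin (m + u) → Fin (m + u)) : ℝ :=
  (∑ i : Fin (m + u), if m ≤ (i : ℕ) then ℓ w (s (z i)) else 0) / u

instance (n : ℕ) : MeasurableSpace (Equiv.Perm (Fin n)) := ⊤

/-- The uniform distribution on the symmetric group of `Fin n` (sampling without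
replacement). -/
def uniformPerm (n : ℕ) : Measure (Equiv.Perm (Fin n)) :=
  letI : Nonempty (Equiv.Perm (Fin n)) := ⟨1⟩
  (PMF.uniformOfFintype (Equiv.Perm (Fin n))).toMeasure

/-- Kullback–Leibler divergence `D_KL(μ ‖ ν) = ∫ log(dμ/dν) dμ`. -/
def klDivR {α : Type*} [MeasurableSpace α] (μ ν : Measure α) : ℝ :=
  ∫ x, llr μ ν x ∂μ

/-- Mutual information `I(X;Y) = D_KL(P_{X,Y} ‖ P_X ⊗ P_Y)`. -/
def mutInfo {Ω α β : Type*} [MeasurableSpace Ω] [MeasurableSpace α] [MeasurableSpace β]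
    (μ : Measure Ω) (X : Ω → α) (Y : Ω → β) : ℝ :=
  klDivR (Measure.map (fun ω => (X ω, Y ω)) μ) ((Measure.map X μ).prod (Measure.map Y μ))

/-! ### Sampling without replacement -/

/-- Hoeffding's lemma for a uniform draw from finitely many values in `[0, B]`. -/
lemma uniform_hoeffding {ι : Type*} [Fintype ι] [Nonempty ι] (a : ι → ℝ) (B : ℝ)
    (ha : ∀ i, a i ∈ Set.Icc 0 B) (t : ℝ) :
    ∑ p, exp (t * (a p - (∑ i, a i) / Fintype.card ι))
      ≤ Fintype.card ι * exp (t ^ 2 * B ^ 2 / 8) := by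
  let _ : MeasurableSpace ι := ⊤
  have : DiscreteMeasurableSpace ι := ⟨fun _ => trivial⟩
  have hc : (0 : ℝ) < Fintype.card ι := by exact_mod_cast Fintype.card_pos
  have hint : ∀ f : ι → ℝ, ∫ x, f x ∂(PMF.uniformOfFintype ι).toMeasure
      = (∑ i, f i) / Fintype.card ι := by
    intro f
    rw [PMF.integral_eq_sum, Finset.sum_div]
    simp [div_eq_inv_mul]
  have h := (hasSubgaussianMGF_of_mem_Icc (μ := (PMF.uniformOfFintype ι).toMeasure) (X := a)
    (a := 0) (b := B) (measurable_of_countable a).aemeasurable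
    (Filter.Eventually.of_forall ha)).mgf_le t
  rw [mgf, hint, hint, div_le_iff₀ hc, mul_comm] at h
  refine h.trans_eq ?_
  congr 2
  simp [div_pow, sq_abs]
  ring

/-- Variance factor for the sum of `m` draws without replacement from `m + u` items. It dominates
`u² ∑_{j = u}^{m + u - 1} j⁻²`, by telescoping `j⁻² ≤ (j - 1/2)⁻¹ - (j + 1/2)⁻¹`. -/
def varFactor (m u : ℕ) : ℝ :=
  (u : ℝ) ^ 2 * m / (((u : ℝ) - 1 / 2) * ((m : ℝ) + u - 1 / 2))

lemma varFactor_step (m u : ℕ) (hu : 1 ≤ u) :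
    varFactor m u + (u / ((m : ℝ) + u)) ^ 2 ≤ varFactor (m + 1) u := by
  have hu' : (1 : ℝ) ≤ u := by exact_mod_cast hu
  have hm' : (0 : ℝ) ≤ m := m.cast_nonneg
  have h0 : (0 : ℝ) < u := by linarith
  have h1 : (0 : ℝ) < (u : ℝ) - 1 / 2 := by linarith
  have h2 : (0 : ℝ) < (m : ℝ) + u - 1 / 2 := by linarith
  have h3 : (0 : ℝ) < (m : ℝ) + u + 1 / 2 := by linarith
  have h4 : (0 : ℝ) < (m : ℝ) + u := by linarith
  have key : varFactor (m + 1) u - varFactor m u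
      = (u : ℝ) ^ 2 / (((m : ℝ) + u - 1 / 2) * ((m : ℝ) + u + 1 / 2)) := by
    have e : ((m + 1 : ℕ) : ℝ) + u - 1 / 2 = (m : ℝ) + u + 1 / 2 := by push_cast; ring
    unfold varFactor
    rw [e]
    push_cast
    rw [div_sub_div _ _ (by positivity) (by positivity),
      div_eq_div_iff (by positivity) (by positivity)]
    ring
  have : (u / ((m : ℝ) + u)) ^ 2
      ≤ (u : ℝ) ^ 2 / (((m : ℝ) + u - 1 / 2) * ((m : ℝ) + u + 1 / 2)) := by
    rw [div_pow]
    apply div_le_div_of_nonneg_left (by positivity) (by positivity)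
    nlinarith
  linarith

/-- Moment generating function bound for sampling without replacement: the centred sum of the
first `m` draws is sub-Gaussian with variance proxy `B² / 4 * varFactor m u`. Conditioning on the
first draw `p` multiplies the remaining dependence on `a p` by `u / (m + u)`, and Hoeffding's lemma
applies to this uniform draw. -/
lemma perm_mgf (u : ℕ) (hu : 1 ≤ u) (B θ : ℝ) (m N : ℕ) (hN : N = m + u) (a : Fin N → ℝ)
    (ha : ∀ i, a i ∈ Set.Icc 0 B) :
    ∑ z : Equiv.Perm (Fin N),
        exp (θ * ((∑ i : Fin N, if (i : ℕ) < m then a (z i) else 0) - m / N * ∑ i, a i))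
      ≤ N.factorial * exp (θ ^ 2 * B ^ 2 / 8 * varFactor m u) := by
  induction m generalizing N with
  | zero => simp [varFactor, Fintype.card_perm]
  | succ m ih =>
    obtain ⟨n, rfl⟩ : ∃ n, N = n + 1 := ⟨m + u, by omega⟩
    have hn : n = m + u := by omega
    have hnR : (n : ℝ) = m + u := by exact_mod_cast hn
    have hu' : (1 : ℝ) ≤ u := by exact_mod_cast hu
    have hm' : (0 : ℝ) ≤ m := m.cast_nonneg
    have hn0 : (0 : ℝ) < n := by linarith
    set A := ∑ i, a i with hA
    -- after drawing `p`, the remaining items are listed by `b p`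
    let b : Fin (n + 1) → Fin n → ℝ := fun p i => a (Equiv.swap 0 p i.succ)
    have hb : ∀ p, ∑ i, b p i = A - a p := by
      intro p
      have h1 : ∑ i, a (Equiv.swap 0 p i) = A := Equiv.sum_comp (Equiv.swap 0 p) a
      rw [Fin.sum_univ_succ, Equiv.swap_apply_left] at h1
      simp only [b]
      linarith
    have hsum : ∀ (p : Fin (n + 1)) (e : Equiv.Perm (Fin n)),
        (∑ i : Fin (n + 1), if (i : ℕ) < m + 1 then
          a (Equiv.Perm.decomposeFin.symm (p, e) i) else 0)
        = a p + ∑ i : Fin n, if (i : ℕ) < m then b p (e i) else 0 := by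
      intro p e
      rw [Fin.sum_univ_succ]
      simp [b, Equiv.Perm.decomposeFin_symm_apply_succ]
    rw [← Equiv.sum_comp Equiv.Perm.decomposeFin.symm, Fintype.sum_prod_type]
    simp_rw [hsum]
    have hsplit : ∀ (p : Fin (n + 1)) (T : ℝ),
        exp (θ * (a p + T - ((m + 1 : ℕ) : ℝ) / ((n + 1 : ℕ) : ℝ) * A))
        = exp (θ * (u / n) * (a p - A / ((n : ℝ) + 1)))
          * exp (θ * (T - m / n * (∑ i, b p i))) := by
      intro p T
      rw [← exp_add, hb]
      congr 1
      have : (u : ℝ) = n - m := by linarith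
      rw [this]
      push_cast
      field_simp
      ring
    simp_rw [hsplit, ← Finset.mul_sum]
    have hbd : ∀ p, ∀ i, b p i ∈ Set.Icc 0 B := fun p i => ha _
    calc _ ≤ ∑ p : Fin (n + 1), exp (θ * (u / n) * (a p - A / ((n : ℝ) + 1)))
            * (n.factorial * exp (θ ^ 2 * B ^ 2 / 8 * varFactor m u)) :=
          Finset.sum_le_sum fun p _ =>
            mul_le_mul_of_nonneg_left (ih n hn (b p) (hbd p)) (exp_pos _).le
      _ ≤ ((n : ℝ) + 1) * exp ((θ * (u / n)) ^ 2 * B ^ 2 / 8)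
            * (n.factorial * exp (θ ^ 2 * B ^ 2 / 8 * varFactor m u)) := by
          rw [← Finset.sum_mul]
          refine mul_le_mul_of_nonneg_right ?_ (by positivity)
          simpa using uniform_hoeffding a B ha (θ * (u / n))
      _ = (n + 1).factorial
            * exp (θ ^ 2 * B ^ 2 / 8 * (varFactor m u + (u / ((m : ℝ) + u)) ^ 2)) := by
          rw [mul_add, exp_add, ← hnR, Nat.factorial_succ]
          push_cast
          rw [show (θ * (u / n)) ^ 2 * B ^ 2 / 8 = θ ^ 2 * B ^ 2 / 8 * ((u : ℝ) / n) ^ 2 by ring]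
          ring
      _ ≤ _ := by
          gcongr
          exact varFactor_step m u hu

/-! ### The gap between test and training error -/

lemma Cmu_of_le (m u : ℕ) (hm : 1 ≤ m) (hmu : m ≤ u) :
    (((m : ℝ) + u) / (m * u)) ^ 2 * varFactor m u = Cmu m u * ((m : ℝ) + u) / (m * u) := by
  have hm' : (1 : ℝ) ≤ m := by exact_mod_cast hm
  have hmu' : (m : ℝ) ≤ u := by exact_mod_cast hmu
  have h0 : (u : ℝ) ≠ 0 := by linarith
  have h0' : (m : ℝ) ≠ 0 := by linarith
  have h1 : (u : ℝ) - 1 / 2 ≠ 0 := by linarith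
  have h2 : (m : ℝ) + u - 1 / 2 ≠ 0 := by linarith
  have h3 : 2 * (u : ℝ) - 1 = 2 * (u - 1 / 2) := by ring
  unfold varFactor Cmu
  rw [max_eq_right hmu', h3]
  generalize (u : ℝ) - 1 / 2 = x at *
  generalize (m : ℝ) + u - 1 / 2 = y at *
  field_simp

lemma Cmu_comm (m u : ℕ) : Cmu m u = Cmu u m := by
  unfold Cmu
  rw [max_comm, add_comm (m : ℝ)]

lemma Cmu_pos (m u : ℕ) (hm : 1 ≤ m) : 0 < Cmu m u := by
  have hm' : (1 : ℝ) ≤ m := by exact_mod_cast hm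
  have hu' : (0 : ℝ) ≤ u := u.cast_nonneg
  have h := le_max_left (m : ℝ) u
  unfold Cmu
  apply div_pos
  · have : 0 < max (m : ℝ) u := by linarith
    positivity
  · exact mul_pos (by linarith) (by linarith)

/-- The gap `Rtest - Rtrain`, for fixed losses `a` of the items. -/
def gap (m u : ℕ) (a : Fin (m + u) → ℝ) (z : Equiv.Perm (Fin (m + u))) : ℝ :=
  (∑ i : Fin (m + u), if m ≤ (i : ℕ) then a (z i) else 0) / u
    - (∑ i : Fin (m + u), if (i : ℕ) < m then a (z i) else 0) / m

lemma sum_train_add_test (m u : ℕ) (a : Fin (m + u) → ℝ) (z : Equiv.Perm (Fin (m + u))) :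
    (∑ i : Fin (m + u), if (i : ℕ) < m then a (z i) else 0)
      + (∑ i : Fin (m + u), if m ≤ (i : ℕ) then a (z i) else 0) = ∑ i, a i := by
  rw [← Finset.sum_add_distrib, ← Equiv.sum_comp z a]
  refine Finset.sum_congr rfl fun i _ => ?_
  by_cases h : (i : ℕ) < m
  · simp [h]
  · simp [h, not_lt.mp h]

/-- The gap is an affine function of the sum over the smaller of the two parts; applying
`perm_mgf` to that part gives the factor `max m u` in `Cmu`. -/
lemma gap_mgf (m u : ℕ) (hm : 1 ≤ m) (hu : 1 ≤ u) (B θ : ℝ) (a : Fin (m + u) → ℝ)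
    (ha : ∀ i, a i ∈ Set.Icc 0 B) :
    ∑ z : Equiv.Perm (Fin (m + u)), exp (θ * gap m u a z)
      ≤ (m + u).factorial
        * exp (θ ^ 2 * (B ^ 2 * Cmu m u * ((m : ℝ) + u) / (4 * m * u)) / 2) := by
  have hm' : (1 : ℝ) ≤ m := by exact_mod_cast hm
  have hu' : (1 : ℝ) ≤ u := by exact_mod_cast hu
  have hm0 : (m : ℝ) ≠ 0 := by linarith
  have hu0 : (u : ℝ) ≠ 0 := by linarith
  have hmu0 : (m : ℝ) + u ≠ 0 := by linarith
  rcases le_total m u with hmu | hmu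
  · have h := perm_mgf u hu B (-(θ * (((m : ℝ) + u) / (m * u)))) m (m + u) rfl a ha
    refine le_trans (le_of_eq ?_) (h.trans_eq ?_)
    · refine Finset.sum_congr rfl fun z _ => ?_
      congr 1
      rw [gap, ← sum_train_add_test m u a z]
      push_cast
      field_simp
      ring
    · congr 2
      have := Cmu_of_le m u hm hmu
      calc _ = θ ^ 2 * B ^ 2 / 8 * ((((m : ℝ) + u) / (m * u)) ^ 2 * varFactor m u) := by ring
        _ = _ := by rw [this]; field_simp; ring
  · have h := perm_mgf m hm B (θ * (((m : ℝ) + u) / (m * u))) u (m + u) (add_comm _ _) a ha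
    refine le_trans (le_of_eq ?_) (h.trans_eq ?_)
    · rw [← Equiv.sum_comp (Equiv.mulRight (Fin.revPerm : Equiv.Perm (Fin (m + u))))]
      refine Finset.sum_congr rfl fun z _ => ?_
      congr 1
      -- reversing the order of the draws turns the last `u` of them into the first `u`
      have hrev : (∑ i : Fin (m + u), if m ≤ (i : ℕ) then a ((z * Fin.revPerm : Equiv.Perm (Fin (m + u))) i) else 0)
          = ∑ i : Fin (m + u), if (i : ℕ) < u then a (z i) else 0 := by
        rw [← Equiv.sum_comp (Fin.revPerm : Equiv.Perm (Fin (m + u)))]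
        refine Finset.sum_congr rfl fun i _ => ?_
        have hi := i.isLt
        have : m ≤ ((Fin.revPerm i : Fin (m + u)) : ℕ) ↔ (i : ℕ) < u := by
          simp [Fin.val_rev]; omega
        simp only [this]
        simp
      have hs := sum_train_add_test m u a (z * Fin.revPerm)
      rw [hrev] at hs
      rw [Equiv.coe_mulRight, gap, hrev, ← hs]
      push_cast
      field_simp
      ring
    · congr 2
      have := Cmu_of_le u m hu hmu
      rw [Cmu_comm, add_comm (u : ℝ), mul_comm (u : ℝ)] at this
      calc _ = θ ^ 2 * B ^ 2 / 8 * ((((m : ℝ) + u) / (m * u)) ^ 2 * varFactor u m) := by ring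
        _ = _ := by rw [this]; field_simp; ring

lemma abs_gap_mgf (m u : ℕ) (hm : 1 ≤ m) (hu : 1 ≤ u) (B θ : ℝ) (a : Fin (m + u) → ℝ)
    (ha : ∀ i, a i ∈ Set.Icc 0 B) :
    ∑ z : Equiv.Perm (Fin (m + u)), exp (θ * |gap m u a z|)
      ≤ (m + u).factorial
        * (2 * exp (θ ^ 2 * (B ^ 2 * Cmu m u * ((m : ℝ) + u) / (4 * m * u)) / 2)) := by
  have h1 := gap_mgf m u hm hu B θ a ha
  have h2 := gap_mgf m u hm hu B (-θ) a ha
  rw [neg_sq] at h2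
  calc _ ≤ ∑ z : Equiv.Perm (Fin (m + u)), (exp (θ * gap m u a z) + exp (-θ * gap m u a z)) := by
        refine Finset.sum_le_sum fun z _ => ?_
        rcases abs_cases (gap m u a z) with ⟨h, _⟩ | ⟨h, _⟩
        · rw [h]; linarith [exp_pos (-θ * gap m u a z)]
        · rw [h, show θ * -gap m u a z = -θ * gap m u a z by ring]
          linarith [exp_pos (θ * gap m u a z)]
    _ ≤ _ := by
        rw [Finset.sum_add_distrib]
        linarith

/-! ### Change of measure -/

/-- The Donsker–Varadhan inequality, obtained from Gibbs' inequality for the tilted measure. -/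
lemma donsker_varadhan {α : Type*} [MeasurableSpace α] (P Q : Measure α) [IsProbabilityMeasure P]
    [IsProbabilityMeasure Q] (hac : P ≪ Q) (hint : Integrable (llr P Q) P) (f : α → ℝ)
    (hfP : Integrable f P) (hfQ : Integrable (fun x => exp (f x)) Q) :
    ∫ x, f x ∂P ≤ klDivR P Q + log (∫ x, exp (f x) ∂Q) := by
  have := isProbabilityMeasure_tilted hfQ
  have h := InformationTheory.integral_llr_add_sub_measure_univ_nonneg
    (hac.trans (absolutelyContinuous_tilted hfQ)) (integrable_llr_tilted_right hac hfP hint hfQ)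
  rw [integral_llr_tilted_right hac hfP hfQ hint] at h
  simp only [probReal_univ] at h
  unfold klDivR
  linarith

/-- A bounded density has an integrable log-likelihood ratio. -/
lemma integrable_llr_of_le {α : Type*} [MeasurableSpace α] (P Q : Measure α)
    [IsProbabilityMeasure P] [IsProbabilityMeasure Q] (hac : P ≪ Q) (c : NNReal)
    (hle : P ≤ c • Q) : Integrable (llr P Q) P := by
  have hbd : ∀ᵐ x ∂Q, P.rnDeriv Q x ≤ c := by
    refine ae_le_of_forall_setLIntegral_le_of_sigmaFinite (P.measurable_rnDeriv Q) fun s hs _ => ?_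
    calc _ ≤ P s := Measure.setLIntegral_rnDeriv_le s
      _ ≤ (c • Q) s := hle s
      _ = _ := by simp
  rw [← integrable_rnDeriv_mul_log_iff hac]
  obtain ⟨K, hK⟩ := (isCompact_Icc (a := (0 : ℝ)) (b := c)).exists_bound_of_continuousOn
    (continuous_mul_log.continuousOn)
  refine Integrable.of_bound (C := K) ?_ ?_
  · exact (continuous_mul_log.measurable.comp
      (P.measurable_rnDeriv Q).ennreal_toReal).aestronglyMeasurable
  · filter_upwards [hbd] with x hx
    exact hK _ ⟨ENNReal.toReal_nonneg, by
      simpa using ENNReal.toReal_mono ENNReal.coe_ne_top hx⟩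

/-! ### The uniform law on permutations -/

instance (n : ℕ) : DiscreteMeasurableSpace (Equiv.Perm (Fin n)) := ⟨fun _ => trivial⟩

instance (n : ℕ) : IsProbabilityMeasure (uniformPerm n) := by
  unfold uniformPerm
  infer_instance

lemma uniformPerm_singleton (n : ℕ) (z : Equiv.Perm (Fin n)) :
    uniformPerm n {z} = ((n.factorial : ℕ) : ENNReal)⁻¹ := by
  unfold uniformPerm
  rw [PMF.toMeasure_apply_singleton _ _ (MeasurableSet.singleton z)]
  simp [Fintype.card_perm]

lemma integral_uniformPerm (n : ℕ) (f : Equiv.Perm (Fin n) → ℝ) :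
    ∫ z, f z ∂(uniformPerm n) = (∑ z, f z) / n.factorial := by
  rw [integral_fintype (Integrable.of_finite), Finset.sum_div]
  simp [measureReal_def, uniformPerm_singleton, div_eq_inv_mul]

/-- The joint law of `(W, Z)` has density at most `n!` with respect to the product of the law of
`W` and the uniform law: the slice of an event at `Z = z` has probability at most that of its
`W`-section. -/
lemma joint_le {Ω 𝒲 : Type*} [MeasurableSpace Ω] [MeasurableSpace 𝒲] (n : ℕ)
    (μ : Measure Ω) [IsProbabilityMeasure μ] (W : Ω → 𝒲) (Z : Ω → Equiv.Perm (Fin n))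
    (hW : Measurable W) (hZ : Measurable Z) :
    Measure.map (fun ω => (W ω, Z ω)) μ
      ≤ (n.factorial : NNReal) • (Measure.map W μ).prod (uniformPerm n) := by
  have := Measure.isProbabilityMeasure_map (μ := μ) hW.aemeasurable
  have hf : (n.factorial : ENNReal) ≠ 0 := by exact_mod_cast n.factorial_ne_zero
  refine Measure.le_iff.2 fun s hs => ?_
  have hslice : ∀ z : Equiv.Perm (Fin n), MeasurableSet ((fun w : 𝒲 => (w, z)) ⁻¹' s) :=
    fun z => measurable_prodMk_right hs
  rw [Measure.map_apply (hW.prodMk hZ) hs, Measure.smul_apply, Measure.prod_apply_symm hs,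
    lintegral_fintype]
  simp only [uniformPerm_singleton]
  rw [← Finset.sum_mul, mul_comm, ENNReal.smul_def, smul_eq_mul, ← mul_assoc]
  simp only [ENNReal.coe_natCast]
  rw [ENNReal.mul_inv_cancel hf (ENNReal.natCast_ne_top _), one_mul]
  calc _ ≤ μ (⋃ z ∈ (Finset.univ : Finset (Equiv.Perm (Fin n))),
        W ⁻¹' ((fun w : 𝒲 => (w, z)) ⁻¹' s)) :=
        measure_mono fun ω hω => by simpa using ⟨Z ω, hω⟩
    _ ≤ ∑ z, μ (W ⁻¹' ((fun w : 𝒲 => (w, z)) ⁻¹' s)) := measure_biUnion_finset_le _ _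
    _ = _ := Finset.sum_congr rfl fun z _ => (Measure.map_apply hW (hslice z)).symm

theorem statement3 {Ω S 𝒲 : Type*} [MeasurableSpace Ω] [MeasurableSpace S] [MeasurableSpace 𝒲]
    (m u : ℕ) (hm : 1 ≤ m) (hu : 1 ≤ u)
    (s : Fin (m + u) → S) (B : ℝ) (hB : 0 < B)
    (ℓ : 𝒲 → S → ℝ) (hℓmeas : Measurable fun p : 𝒲 × S => ℓ p.1 p.2)
    (hℓ : ∀ (w : 𝒲) (i : Fin (m + u)), 0 ≤ ℓ w (s i) ∧ ℓ w (s i) ≤ B)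
    (μ : Measure Ω) [IsProbabilityMeasure μ]
    (W : Ω → 𝒲) (Z : Ω → Equiv.Perm (Fin (m + u)))
    (hW : Measurable W) (hZ : Measurable Z)
    (hZunif : Measure.map Z μ = uniformPerm (m + u))
    (hac : Measure.map (fun ω => (W ω, Z ω)) μ ≪ (Measure.map W μ).prod (Measure.map Z μ)) :
    ∫ ω, |Rtest m u s ℓ (W ω) (Z ω) - Rtrain m u s ℓ (W ω) (Z ω)| ∂μ
      ≤ Real.sqrt (B ^ 2 * Cmu m u * ((m : ℝ) + u) * (mutInfo μ W Z + Real.log 2)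
          / (2 * m * u)) := by
  classical
  have hm' : (1 : ℝ) ≤ m := by exact_mod_cast hm
  have hu' : (1 : ℝ) ≤ u := by exact_mod_cast hu
  have hC := Cmu_pos m u hm
  have := Measure.isProbabilityMeasure_map (μ := μ) hW.aemeasurable
  have := Measure.isProbabilityMeasure_map (μ := μ) (hW.prodMk hZ).aemeasurable
  set σ2 : ℝ := B ^ 2 * Cmu m u * ((m : ℝ) + u) / (4 * m * u) with hσ
  have hσpos : 0 < σ2 := by
    have : (0 : ℝ) < m := by linarith
    have : (0 : ℝ) < u := by linarith
    positivity
  let F : 𝒲 × Equiv.Perm (Fin (m + u)) → ℝ := fun p => |gap m u (fun i => ℓ p.1 (s i)) p.2|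
  have hFmeas : Measurable F := by
    refine measurable_from_prod_countable_left fun z => ?_
    have hl : ∀ j, Measurable fun w => ℓ w (s j) := fun j =>
      hℓmeas.comp (measurable_id.prodMk measurable_const)
    refine (Measurable.sub ?_ ?_).abs <;>
      refine (Finset.measurable_sum _ fun i _ => ?_).div_const _ <;> split_ifs <;>
      first | exact hl (z i) | exact measurable_const
  have hterm : ∀ (q : Prop) [Decidable q] (w : 𝒲) (j : Fin (m + u)),
      0 ≤ (if q then ℓ w (s j) else 0) ∧ (if q then ℓ w (s j) else 0) ≤ B := by
    intro q _ w j
    split_ifs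
    · exact hℓ w j
    · exact ⟨le_rfl, hB.le⟩
  have hFbd : ∀ p, F p ≤ ((m + u : ℕ) : ℝ) * B := by
    intro p
    have key : ∀ (q : Fin (m + u) → Prop) [DecidablePred q] (k : ℝ), 1 ≤ k →
        0 ≤ (∑ i : Fin (m + u), if q i then ℓ p.1 (s (p.2 i)) else 0) / k ∧
        (∑ i : Fin (m + u), if q i then ℓ p.1 (s (p.2 i)) else 0) / k ≤ ((m + u : ℕ) : ℝ) * B := by
      intro q _ k hk
      have h0 : 0 ≤ ∑ i : Fin (m + u), if q i then ℓ p.1 (s (p.2 i)) else 0 :=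
        Finset.sum_nonneg fun i _ => (hterm _ _ _).1
      have h1 : (∑ i : Fin (m + u), if q i then ℓ p.1 (s (p.2 i)) else 0) ≤ ((m + u : ℕ) : ℝ) * B := by
        refine (Finset.sum_le_sum fun i _ => (hterm (q i) p.1 (p.2 i)).2).trans_eq ?_
        simp
      exact ⟨div_nonneg h0 (by linarith), (div_le_self h0 hk).trans h1⟩
    have h1 := key (fun i => m ≤ (i : ℕ)) u hu'
    have h2 := key (fun i => (i : ℕ) < m) m hm'
    exact abs_sub_le_of_nonneg_of_le h1.1 h1.2 h2.1 h2.2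
  have hF0 : ∀ p, 0 ≤ F p := fun p => abs_nonneg _
  set P := Measure.map (fun ω => (W ω, Z ω)) μ with hP
  set E := ∫ p, F p ∂P with hE
  have hLHS : ∫ ω, |Rtest m u s ℓ (W ω) (Z ω) - Rtrain m u s ℓ (W ω) (Z ω)| ∂μ = E := by
    rw [hE, hP, integral_map (hW.prodMk hZ).aemeasurable hFmeas.aestronglyMeasurable]
    rfl
  have hE0 : 0 ≤ E := integral_nonneg hF0
  have hFint : Integrable F P := Integrable.of_bound hFmeas.aestronglyMeasurable (((m + u : ℕ) : ℝ) * B)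
    (Filter.Eventually.of_forall fun p => by rw [norm_eq_abs, abs_of_nonneg (hF0 p)]; exact hFbd p)
  have hI : mutInfo μ W Z = klDivR P ((Measure.map W μ).prod (uniformPerm (m + u))) := by
    rw [mutInfo, hZunif]
  rw [hZunif] at hac
  set Q := (Measure.map W μ).prod (uniformPerm (m + u)) with hQ
  -- `Z` takes finitely many values, so the divergence is a genuine integral
  have hllr : Integrable (llr P Q) P := integrable_llr_of_le P Q hac _ (joint_le (m + u) μ W Z hW hZ)
  -- with this choice of parameter, `lam * E ≤ K + lam² σ² / 2` reads `E² ≤ 2 σ² K`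
  set lam := E / σ2 with hlam
  have hlam0 : 0 ≤ lam := div_nonneg hE0 hσpos.le
  have hexpint : Integrable (fun p => exp (lam * F p)) Q :=
    Integrable.of_bound (hFmeas.const_mul _).exp.aestronglyMeasurable (exp (lam * (((m + u : ℕ) : ℝ) * B)))
      (Filter.Eventually.of_forall fun p => by
        rw [norm_eq_abs, abs_of_pos (exp_pos _)]
        exact exp_le_exp.2 (mul_le_mul_of_nonneg_left (hFbd p) hlam0))
  have hmgf : ∫ p, exp (lam * F p) ∂Q ≤ 2 * exp (lam ^ 2 * σ2 / 2) := by
    rw [hQ, integral_prod _ hexpint]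
    calc _ ≤ ∫ w, 2 * exp (lam ^ 2 * σ2 / 2) ∂(Measure.map W μ) := by
          refine integral_mono hexpint.integral_prod_left (integrable_const _) fun w => ?_
          simp only
          rw [integral_uniformPerm, div_le_iff₀ (by exact_mod_cast (m + u).factorial_pos),
            mul_comm _ ((m + u).factorial : ℝ)]
          exact abs_gap_mgf m u hm hu B lam (fun i => ℓ w (s i)) fun i => hℓ w i
      _ = _ := by simp
  have hDV := donsker_varadhan P Q hac hllr (fun p => lam * F p) (hFint.const_mul _) hexpint
  have hpos : 0 < ∫ p, exp (lam * F p) ∂Q := integral_exp_pos hexpint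
  have hlog : log (∫ p, exp (lam * F p) ∂Q) ≤ log 2 + lam ^ 2 * σ2 / 2 := by
    refine (log_le_log hpos hmgf).trans_eq ?_
    rw [log_mul two_ne_zero (exp_ne_zero _), log_exp]
  rw [integral_const_mul, ← hE, ← hI] at hDV
  rw [hLHS]
  apply Real.le_sqrt_of_sq_le
  have h1 : lam * E = E ^ 2 / σ2 := by rw [hlam]; ring
  have h2 : lam ^ 2 * σ2 / 2 = E ^ 2 / σ2 / 2 := by rw [hlam]; field_simp
  have h3 : E ^ 2 / σ2 ≤ 2 * (mutInfo μ W Z + log 2) := by linarith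
  rw [div_le_iff₀ hσpos] at h3
  refine h3.trans_eq ?_
  rw [hσ]
  have : (m : ℝ) ≠ 0 := by linarith
  have : (u : ℝ) ≠ 0 := by linarith
  field_simp
  ring

end
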